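/- Let X be a pospace, t a trace in X, and α₀ the trace of the constant dipath at the initial point t(0) of t. Then the interval [α₀, t] in the trace poset tpos(X) is totally ordered; consequently, every chain in tpos(X) with least element α₀ and greatest element t is contained in [α₀, t], and [α₀, t] is the unique maximal chain in tpos(X) with least element α₀ and greatest element t. The same statements hold with the terminal point α₁ (the trace of the constant dipath at t(1)) in place of α₀. -/

import Mathlib

open unitInterval

noncomputable section

/-- A reparametrization of the unit interval: continuous, monotone, fixing the endpoints. -/
def IsReparam (φ : unitInterval → unitInterval) : Prop :=
  Continuous φ ∧ Monotone φ ∧ φ 0 = 0 ∧ φ 1 = 1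

/-- Reparametrization equivalence of paths. -/
def ReparamEquiv {X : Type*} (f g : unitInterval → X) : Prop :=
  ∃ φ ψ : unitInterval → unitInterval, IsReparam φ ∧ IsReparam ψ ∧ f ∘ φ = g ∘ ψ

/-- A dipath in a pospace: a continuous monotone map `[0,1] → X`. -/
def IsDipath {X : Type*} [TopologicalSpace X] [Preorder X] (p : unitInterval → X) : Prop :=
  Continuous p ∧ Monotone p

/-- Concatenation of paths: `f` (rescaled) on `[0,1/2]`, `g` (rescaled) on `[1/2,1]`. -/
def concatFun {X : Type*} (f g : unitInterval → X) : unitInterval → X :=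
  fun t => if (t : ℝ) ≤ 1 / 2 then f (Set.projIcc 0 1 zero_le_one (2 * (t : ℝ)))
    else g (Set.projIcc 0 1 zero_le_one (2 * (t : ℝ) - 1))

/-- Traces: paths up to reparametrization equivalence. -/
def Trace (X : Type*) : Type _ := Quot (ReparamEquiv (X := X))

/-- The trace of a path. -/
def trc {X : Type*} (f : unitInterval → X) : Trace X := Quot.mk _ f

/-- The order on traces of a pospace: `⟨f⟩ ≤ ⟨g⟩` iff `⟨g⟩ = ⟨u⟩ ⋆ ⟨f⟩ ⋆ ⟨v⟩` for dipaths `u,v`. -/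
def TraceLE {X : Type*} [TopologicalSpace X] [PartialOrder X] (a b : Trace X) : Prop :=
  ∃ f u v : unitInterval → X,
    IsDipath f ∧ IsDipath u ∧ IsDipath v ∧
    u 1 = f 0 ∧ f 1 = v 0 ∧
    a = trc f ∧ b = trc (concatFun (concatFun u f) v)

/-- The interval `[a, b]` in the trace poset. -/
def TInterval {X : Type*} [TopologicalSpace X] [PartialOrder X] (a b : Trace X) :
    Set (Trace X) :=
  {c | TraceLE a c ∧ TraceLE c b}

/-! Two dipaths with the same endpoints whose values are mutually comparable have the same trace: on
each line `s + t = r` of the square `[0,1]²` pick the last point `(s, t)` with `f s ≤ g t`; it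
satisfies `f s = g t`, and both coordinates are monotone and 1-Lipschitz in `r`, hence
reparametrizations. Consequently `⟨f⟩ ≤ ⟨g⟩` says exactly that the image of `f` lies in the image of
`g`. Since images are connected chains, `[α₀, ⟨f⟩]` consists of the traces whose images are the
initial segments of the image of `f`, which are linearly ordered by inclusion; dually for `α₁`. -/

section SyncTime

variable {X : Type*} {F G : ℝ → X}

/-- The times `s` at which `F` has not overtaken `G`, when the times elapsed along `F` and `G` add
up to `r`. Here `F` and `G` play the role of paths extended constantly outside `[0,1]`; the bound
`s ≤ min 1 r` makes the supremum `syncTime F G r` run exactly from `0` at `r = 0` to `1` at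
`r = 2`. -/
def syncSet [LE X] (F G : ℝ → X) (r : ℝ) : Set ℝ :=
  {s | s ≤ min 1 r ∧ F s ≤ G (r - s)}

/-- The parametrization of `F` that synchronizes it with `G`: under the hypotheses of
`apply_syncTime_le` and `le_apply_syncTime`, the value of `F` at time `syncTime F G r` is that of
`G` at time `r - syncTime F G r`. -/
def syncTime [LE X] (F G : ℝ → X) (r : ℝ) : ℝ :=
  sSup (syncSet F G r)

lemma bddAbove_syncSet [LE X] {r : ℝ} : BddAbove (syncSet F G r) :=
  ⟨min 1 r, fun _ h => h.1⟩

lemma le_syncTime [LE X] {r s : ℝ} (hs : s ≤ min 1 r) (hFG : F s ≤ G (r - s)) :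
    s ≤ syncTime F G r :=
  le_csSup bddAbove_syncSet ⟨hs, hFG⟩

variable [Preorder X]

lemma syncSet_nonempty (hF : Monotone F) (h₀ : ∀ t, F 0 ≤ G t) (r : ℝ) :
    (syncSet F G r).Nonempty :=
  ⟨min 0 r, min_le_min_right r zero_le_one, (hF (min_le_left 0 r)).trans (h₀ _)⟩

lemma syncTime_le_min (hF : Monotone F) (h₀ : ∀ t, F 0 ≤ G t) (r : ℝ) :
    syncTime F G r ≤ min 1 r :=
  csSup_le (syncSet_nonempty hF h₀ r) fun _ h => h.1

lemma syncTime_zero (hF : Monotone F) (h₀ : ∀ t, F 0 ≤ G t) : syncTime F G 0 = 0 :=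
  ((syncTime_le_min hF h₀ 0).trans (min_le_right 1 0)).antisymm
    (le_syncTime (by simp) (h₀ _))

lemma syncTime_two (hF : Monotone F) (h₀ : ∀ t, F 0 ≤ G t) (h₁ : F 1 ≤ G 1) :
    syncTime F G 2 = 1 :=
  ((syncTime_le_min hF h₀ 2).trans (min_le_left 1 2)).antisymm
    (le_syncTime (by norm_num) (by norm_num [h₁]))

lemma monotone_syncTime (hF : Monotone F) (hG : Monotone G) (h₀ : ∀ t, F 0 ≤ G t) :
    Monotone (syncTime F G) := fun r r' hr =>
  csSup_le (syncSet_nonempty hF h₀ r) fun _ ⟨hs, hFG⟩ =>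
    le_syncTime (hs.trans (min_le_min_left 1 hr)) (hFG.trans (hG (by linarith)))

lemma monotone_sub_syncTime (hF : Monotone F) (h₀ : ∀ t, F 0 ≤ G t) :
    Monotone fun r => r - syncTime F G r := fun r r' hr => by
  suffices syncTime F G r' ≤ syncTime F G r + (r' - r) by dsimp only; linarith
  refine csSup_le (syncSet_nonempty hF h₀ r') fun s ⟨hs, hFG⟩ => ?_
  rw [le_min_iff] at hs
  have h_shift : F (s - (r' - r)) ≤ G (r - (s - (r' - r))) := by
    rw [show r - (s - (r' - r)) = r' - s by ring]
    exact (hF (by linarith)).trans hFG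
  linarith [le_syncTime (le_min (by linarith) (by linarith)) h_shift]

lemma continuous_syncTime (hF : Monotone F) (hG : Monotone G) (h₀ : ∀ t, F 0 ≤ G t) :
    Continuous (syncTime F G) := by
  refine (LipschitzWith.of_le_add fun r r' => ?_).continuous
  rw [Real.dist_eq]
  rcases le_total r r' with h | h
  · linarith [monotone_syncTime hF hG h₀ h, abs_nonneg (r - r')]
  · linarith [monotone_sub_syncTime hF h₀ h, le_abs_self (r - r')]

lemma apply_syncTime_le [TopologicalSpace X] [OrderClosedTopology X] (hF : Monotone F)
    (hFc : Continuous F) (hGc : Continuous G) (h₀ : ∀ t, F 0 ≤ G t) (r : ℝ) :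
    F (syncTime F G r) ≤ G (r - syncTime F G r) := by
  have h_closed : IsClosed (syncSet F G r) :=
    isClosed_Iic.inter (isClosed_le hFc (by fun_prop))
  exact (h_closed.csSup_mem (syncSet_nonempty hF h₀ r) bddAbove_syncSet).2

lemma le_apply_syncTime [TopologicalSpace X] [OrderClosedTopology X] (hF : Monotone F)
    (hFc : Continuous F) (hGc : Continuous G) (hFG : ∀ s t, F s ≤ G t ∨ G t ≤ F s)
    (h₀ : ∀ t, F 0 ≤ G t) (h₀' : ∀ s, G 0 ≤ F s) (h₁ : ∀ t, G t ≤ F 1) (r : ℝ) :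
    G (r - syncTime F G r) ≤ F (syncTime F G r) := by
  rcases (syncTime_le_min hF h₀ r).eq_or_lt with h_eq | h_lt
  · rcases min_choice 1 r with h | h <;> rw [h_eq, h]
    · exact h₁ _
    · simpa using h₀' r
  · have h_after : ∀ s ∈ Set.Ioc (syncTime F G r) (min 1 r), G (r - s) ≤ F s := fun s hs =>
      (hFG s (r - s)).resolve_left fun h => (le_syncTime hs.2 h).not_gt hs.1
    refine le_on_closure h_after (by fun_prop) (by fun_prop) ?_
    rw [closure_Ioc h_lt.ne]
    exact Set.left_mem_Icc.2 h_lt.le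

end SyncTime

section Comparable

variable {X : Type*}

lemma mem_range_of_forall_le_or_le {T : Type*} [TopologicalSpace T] [PreconnectedSpace T]
    [TopologicalSpace X] [PartialOrder X] [OrderClosedTopology X] {f : T → X}
    (hf : Continuous f) {y : X} (hy : ∀ s, f s ≤ y ∨ y ≤ f s) (h₀ : ∃ s, f s ≤ y)
    (h₁ : ∃ s, y ≤ f s) : y ∈ Set.range f := by
  obtain ⟨s, -, hs, hs'⟩ := isPreconnected_closed_iff.1 isPreconnected_univ
    {s | f s ≤ y} {s | y ≤ f s} (isClosed_le hf continuous_const) (isClosed_le continuous_const hf)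
    (fun s _ => hy s) (h₀.imp fun _ h => ⟨trivial, h⟩)
    (h₁.imp fun _ h => ⟨trivial, h⟩)
  exact ⟨s, hs.antisymm hs'⟩

lemma le_or_le_of_range_subset {S T T' : Type*} [LinearOrder S] [Preorder X] {f : S → X}
    {p : T → X} {q : T' → X} (hf : Monotone f) (hp : Set.range p ⊆ Set.range f)
    (hq : Set.range q ⊆ Set.range f) (s : T) (t : T') : p s ≤ q t ∨ q t ≤ p s := by
  obtain ⟨a, ha⟩ := hp ⟨s, rfl⟩
  obtain ⟨b, hb⟩ := hq ⟨t, rfl⟩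
  rw [← ha, ← hb]
  exact (le_total a b).imp (@hf a b) (@hf b a)

lemma range_subset_range_of_le_of_le [TopologicalSpace X] [PartialOrder X]
    [OrderClosedTopology X] {p q : I → X} (hp : Monotone p) (hq : Continuous q)
    (hpq : ∀ s t, p s ≤ q t ∨ q t ≤ p s) (h₀ : q 0 ≤ p 0) (h₁ : p 1 ≤ q 1) :
    Set.range p ⊆ Set.range q := by
  rintro _ ⟨s, rfl⟩
  exact mem_range_of_forall_le_or_le hq (fun t => (hpq s t).symm)
    ⟨0, h₀.trans (hp nonneg')⟩ ⟨1, (hp le_one').trans h₁⟩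

lemma apply_zero_eq_of_range_subset [PartialOrder X] {p f : I → X} (hp : Monotone p)
    (hf : Monotone f) (hpf : Set.range p ⊆ Set.range f) (hmem : f 0 ∈ Set.range p) :
    p 0 = f 0 := by
  obtain ⟨s, hs⟩ := hmem
  obtain ⟨t, ht⟩ := hpf ⟨0, rfl⟩
  exact (hs ▸ hp nonneg').antisymm (ht ▸ hf nonneg')

lemma apply_one_eq_of_range_subset [PartialOrder X] {p f : I → X} (hp : Monotone p)
    (hf : Monotone f) (hpf : Set.range p ⊆ Set.range f) (hmem : f 1 ∈ Set.range p) :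
    p 1 = f 1 := by
  obtain ⟨s, hs⟩ := hmem
  obtain ⟨t, ht⟩ := hpf ⟨1, rfl⟩
  exact (ht ▸ hf le_one').antisymm (hs ▸ hp le_one')

end Comparable

section Reparam

variable {X : Type*}

lemma IsReparam.surjective {φ : I → I} (hφ : IsReparam φ) : Function.Surjective φ := by
  obtain ⟨hc, -, h₀, h₁⟩ := hφ
  exact fun y => mem_range_of_exists_le_of_exists_ge hc ⟨0, h₀.trans_le nonneg'⟩
    ⟨1, le_one'.trans_eq h₁.symm⟩

lemma ReparamEquiv.range_eq {f g : I → X} (h : ReparamEquiv f g) :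
    Set.range f = Set.range g := by
  obtain ⟨φ, ψ, hφ, hψ, hfg⟩ := h
  rw [← hφ.surjective.range_comp f, hfg, hψ.surjective.range_comp g]

lemma isReparam_projIcc_two_mul {τ : ℝ → ℝ} (hc : Continuous τ) (hm : Monotone τ)
    (h₀ : τ 0 = 0) (h₂ : τ 2 = 1) :
    IsReparam fun x : I => Set.projIcc 0 1 zero_le_one (τ (2 * x)) :=
  ⟨continuous_projIcc.comp (hc.comp (by fun_prop)),
    fun _ _ hxy => Set.monotone_projIcc _ (hm (mul_le_mul_of_nonneg_left hxy zero_le_two)),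
    by simp [h₀], by simp [h₂]⟩

lemma reparamEquiv_of_forall_le_or_le [TopologicalSpace X] [PartialOrder X]
    [OrderClosedTopology X] {f g : I → X} (hf : IsDipath f) (hg : IsDipath g)
    (hfg : ∀ s t, f s ≤ g t ∨ g t ≤ f s) (h₀ : f 0 = g 0) (h₁ : f 1 = g 1) :
    ReparamEquiv f g := by
  obtain ⟨hfc, hfm⟩ := hf
  obtain ⟨hgc, hgm⟩ := hg
  set F := Set.IccExtend zero_le_one f
  set G := Set.IccExtend zero_le_one g
  have hFm : Monotone F := hfm.IccExtend _
  have hGm : Monotone G := hgm.IccExtend _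
  have hF₀ : F 0 = f 0 := Set.IccExtend_left _ f
  have hG₀ : G 0 = g 0 := Set.IccExtend_left _ g
  have hF₁ : F 1 = f 1 := Set.IccExtend_right _ f
  have hG₁ : G 1 = g 1 := Set.IccExtend_right _ g
  have hFG₀ : ∀ t, F 0 ≤ G t := fun _ => (hF₀.trans h₀).trans_le (hgm nonneg')
  have hGF₀ : ∀ s, G 0 ≤ F s := fun _ => (hG₀.trans h₀.symm).trans_le (hfm nonneg')
  have hGF₁ : ∀ t, G t ≤ F 1 := fun _ => (hgm le_one').trans_eq (h₁.symm.trans hF₁.symm)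
  have hFG : ∀ r, F (syncTime F G r) = G (r - syncTime F G r) := fun r =>
    (apply_syncTime_le hFm hfc.Icc_extend' hgc.Icc_extend' hFG₀ r).antisymm
      (le_apply_syncTime hFm hfc.Icc_extend' hgc.Icc_extend' (fun _ _ => hfg _ _) hFG₀ hGF₀ hGF₁ r)
  have hτ := continuous_syncTime hFm hGm hFG₀
  have hτ₀ := syncTime_zero hFm hFG₀
  have hτ₂ := syncTime_two hFm hFG₀ (hF₁.trans (h₁.trans hG₁.symm)).le
  exact ⟨_, _, isReparam_projIcc_two_mul hτ (monotone_syncTime hFm hGm hFG₀) hτ₀ hτ₂,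
    isReparam_projIcc_two_mul (continuous_id.sub hτ) (monotone_sub_syncTime hFm hFG₀)
      (by simp [hτ₀]) (by norm_num [hτ₂]), funext fun x => hFG (2 * x)⟩

end Reparam

section Concat

variable {X : Type*}

lemma concatFun_eq_trans [TopologicalSpace X] {f g : I → X} (hf : Continuous f)
    (hg : Continuous g) (h : f 1 = g 0) :
    concatFun f g = Path.trans ⟨⟨f, hf⟩, rfl, h⟩ ⟨⟨g, hg⟩, rfl, rfl⟩ :=
  rfl

lemma range_concatFun [TopologicalSpace X] {f g : I → X} (hf : Continuous f)
    (hg : Continuous g) (h : f 1 = g 0) :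
    Set.range (concatFun f g) = Set.range f ∪ Set.range g := by
  rw [concatFun_eq_trans hf hg h]
  exact Path.trans_range _ _

lemma continuous_concatFun [TopologicalSpace X] {f g : I → X} (hf : Continuous f)
    (hg : Continuous g) (h : f 1 = g 0) : Continuous (concatFun f g) := by
  rw [concatFun_eq_trans hf hg h]
  exact Path.continuous _

lemma monotone_concatFun [Preorder X] {f g : I → X} (hf : Monotone f) (hg : Monotone g)
    (h : f 1 = g 0) : Monotone (concatFun f g) := by
  intro x y hxy
  have hxy' : (x : ℝ) ≤ y := hxy
  unfold concatFun
  split_ifs with hx hy hy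
  · exact hf (Set.monotone_projIcc _ (by linarith))
  · exact (hf le_one').trans (h.trans_le (hg nonneg'))
  · exact absurd (hxy'.trans hy) hx
  · exact hg (Set.monotone_projIcc _ (by linarith))

lemma concatFun_zero (f g : I → X) : concatFun f g 0 = f 0 := by
  simp [concatFun]

lemma concatFun_one (f g : I → X) : concatFun f g 1 = g 1 := by
  norm_num [concatFun]

lemma IsDipath.concatFun [TopologicalSpace X] [Preorder X] {f g : I → X} (hf : IsDipath f)
    (hg : IsDipath g) (h : f 1 = g 0) : IsDipath (concatFun f g) :=
  ⟨continuous_concatFun hf.1 hg.1 h, monotone_concatFun hf.2 hg.2 h⟩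

end Concat

section TraceOrder

variable {X : Type*}

/-- The image of a trace, that is, of any path representing it; it turns the order on traces into
inclusion. -/
def traceRange : Trace X → Set X :=
  Quot.lift (fun f => Set.range f) fun _ _ => ReparamEquiv.range_eq

lemma isDipath_const [TopologicalSpace X] [Preorder X] (x : X) : IsDipath fun _ : I => x :=
  ⟨continuous_const, monotone_const⟩

variable [TopologicalSpace X] [PartialOrder X]

lemma TraceLE.exists_isDipath {a b : Trace X} (h : TraceLE a b) :
    ∃ p, IsDipath p ∧ a = trc p := by
  obtain ⟨p, -, -, hp, -, -, -, -, rfl, -⟩ := h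
  exact ⟨p, hp, rfl⟩

lemma TraceLE.traceRange_subset {a b : Trace X} (h : TraceLE a b) :
    traceRange a ⊆ traceRange b := by
  obtain ⟨p, u, v, hp, hu, hv, hup, hpv, rfl, rfl⟩ := h
  change Set.range p ⊆ Set.range (concatFun (concatFun u p) v)
  rw [range_concatFun (hu.concatFun hp hup).1 hv.1 ((concatFun_one u p).trans hpv),
    range_concatFun hu.1 hp.1 hup]
  exact Set.subset_union_right.trans Set.subset_union_left

variable [OrderClosedTopology X] {f p q : I → X}

lemma traceLE_of_range_subset (hp : IsDipath p) (hq : IsDipath q)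
    (hpq : Set.range p ⊆ Set.range q) : TraceLE (trc p) (trc q) := by
  obtain ⟨a, ha⟩ := hpq ⟨0, rfl⟩
  obtain ⟨b, hb⟩ := hpq ⟨1, rfl⟩
  let u : I → X := fun s => q (min a s)
  let v : I → X := fun s => q (max b s)
  have hu : IsDipath u := ⟨hq.1.comp (by fun_prop), fun _ _ h => hq.2 (min_le_min_left a h)⟩
  have hv : IsDipath v := ⟨hq.1.comp (by fun_prop), fun _ _ h => hq.2 (max_le_max_left b h)⟩
  have hup : u 1 = p 0 := by simp only [u, min_eq_left le_one', ha]
  have hpv : p 1 = v 0 := by simp only [v, max_eq_left nonneg', hb]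
  have hupv : concatFun u p 1 = v 0 := (concatFun_one u p).trans hpv
  have h_concat : IsDipath (concatFun (concatFun u p) v) :=
    (hu.concatFun hp hup).concatFun hv hupv
  have h_range : Set.range (concatFun (concatFun u p) v) ⊆ Set.range q := by
    rw [range_concatFun (hu.concatFun hp hup).1 hv.1 hupv, range_concatFun hu.1 hp.1 hup]
    exact Set.union_subset (Set.union_subset (Set.range_comp_subset_range (min a) q) hpq)
      (Set.range_comp_subset_range (max b) q)
  refine ⟨p, u, v, hp, hu, hv, hup, hpv, rfl, Quot.sound <| reparamEquiv_of_forall_le_or_le hq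
    h_concat (le_or_le_of_range_subset hq.2 subset_rfl h_range) ?_ ?_⟩
  · simp only [concatFun_zero, u, min_eq_right nonneg']
  · simp only [concatFun_one, v, max_eq_right le_one']

lemma traceLE_trc_iff (hp : IsDipath p) (hq : IsDipath q) :
    TraceLE (trc p) (trc q) ↔ Set.range p ⊆ Set.range q :=
  ⟨TraceLE.traceRange_subset, traceLE_of_range_subset hp hq⟩

lemma mem_TInterval_const_iff (hf : IsDipath f) {x : X} {c : Trace X} :
    c ∈ TInterval (trc fun _ => x) (trc f) ↔
      ∃ p, IsDipath p ∧ x ∈ Set.range p ∧ Set.range p ⊆ Set.range f ∧ c = trc p := by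
  constructor
  · rintro ⟨hxc, hcf⟩
    obtain ⟨p, hp, rfl⟩ := hcf.exists_isDipath
    rw [traceLE_trc_iff (isDipath_const x) hp, Set.range_const, Set.singleton_subset_iff] at hxc
    exact ⟨p, hp, hxc, (traceLE_trc_iff hp hf).1 hcf, rfl⟩
  · rintro ⟨p, hp, hx, hpf, rfl⟩
    refine ⟨(traceLE_trc_iff (isDipath_const x) hp).2 ?_, (traceLE_trc_iff hp hf).2 hpf⟩
    rwa [Set.range_const, Set.singleton_subset_iff]

lemma traceLE_total_of_apply_eq (hp : IsDipath p) (hq : IsDipath q)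
    (hpq : ∀ s t, p s ≤ q t ∨ q t ≤ p s) (h : p 0 = q 0 ∨ p 1 = q 1) :
    TraceLE (trc p) (trc q) ∨ TraceLE (trc q) (trc p) := by
  have hqp : ∀ s t, q s ≤ p t ∨ p t ≤ q s := fun s t => (hpq t s).symm
  rw [traceLE_trc_iff hp hq, traceLE_trc_iff hq hp]
  rcases h with h₀ | h₁
  · exact (hpq 1 1).imp (range_subset_range_of_le_of_le hp.2 hq.1 hpq h₀.ge)
      (range_subset_range_of_le_of_le hq.2 hp.1 hqp h₀.le)
  · exact (hqp 0 0).imp (range_subset_range_of_le_of_le hp.2 hq.1 hpq · h₁.le)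
      (range_subset_range_of_le_of_le hq.2 hp.1 hqp · h₁.ge)

lemma traceLE_total_of_mem_TInterval_const (hf : IsDipath f) {x : X} (hx : x = f 0 ∨ x = f 1)
    {a b : Trace X} (ha : a ∈ TInterval (trc fun _ => x) (trc f))
    (hb : b ∈ TInterval (trc fun _ => x) (trc f)) : TraceLE a b ∨ TraceLE b a := by
  obtain ⟨p, hp, hxp, hpf, rfl⟩ := (mem_TInterval_const_iff hf).1 ha
  obtain ⟨q, hq, hxq, hqf, rfl⟩ := (mem_TInterval_const_iff hf).1 hb
  refine traceLE_total_of_apply_eq hp hq (le_or_le_of_range_subset hf.2 hpf hqf) ?_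
  rcases hx with rfl | rfl
  · exact .inl ((apply_zero_eq_of_range_subset hp.2 hf.2 hpf hxp).trans
      (apply_zero_eq_of_range_subset hq.2 hf.2 hqf hxq).symm)
  · exact .inr ((apply_one_eq_of_range_subset hp.2 hf.2 hpf hxp).trans
      (apply_one_eq_of_range_subset hq.2 hf.2 hqf hxq).symm)

end TraceOrder

/-- Let `X` be a pospace, `t = ⟨f⟩` a trace in `X` and `α` the trace of the
constant dipath at the initial point `f 0` (resp. at the terminal point `f 1`).  Then the
interval `[α, t]` in the trace poset is totally ordered; every chain with least element `α` and
greatest element `t` is contained in `[α, t]`; and `[α, t]` is the unique maximal chain with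
least element `α` and greatest element `t`. -/
theorem interval_from_endpoint_is_unique_maximal_chain
    {X : Type*} [TopologicalSpace X] [PartialOrder X] [T2Space X] [OrderClosedTopology X]
    (f : unitInterval → X) (hf : IsDipath f) :
    ∀ α : Trace X, (α = trc (fun _ => f 0) ∨ α = trc (fun _ => f 1)) →
      -- the interval [α, ⟨f⟩] is totally ordered
      (IsChain TraceLE (TInterval α (trc f)) ∧
        ∀ a ∈ TInterval α (trc f), ∀ b ∈ TInterval α (trc f), TraceLE a b ∨ TraceLE b a) ∧
      -- α and ⟨f⟩ are its least and greatest elements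
      (α ∈ TInterval α (trc f) ∧ trc f ∈ TInterval α (trc f)) ∧
      -- every chain with least element α and greatest element ⟨f⟩ lies in the interval
      (∀ C : Set (Trace X), IsChain TraceLE C → α ∈ C → trc f ∈ C →
        (∀ c ∈ C, TraceLE α c ∧ TraceLE c (trc f)) → C ⊆ TInterval α (trc f)) ∧
      -- the interval is the unique maximal such chain
      (∀ C : Set (Trace X), IsChain TraceLE C → α ∈ C → trc f ∈ C →
        (∀ c ∈ C, TraceLE α c ∧ TraceLE c (trc f)) →
        (∀ C' : Set (Trace X), IsChain TraceLE C' → α ∈ C' → trc f ∈ C' →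
          (∀ c ∈ C', TraceLE α c ∧ TraceLE c (trc f)) → C ⊆ C' → C' = C) →
        C = TInterval α (trc f)) := by
  intro α hα
  obtain ⟨x, hx, rfl⟩ : ∃ x, (x = f 0 ∨ x = f 1) ∧ α = trc fun _ => x := by
    rcases hα with rfl | rfl
    exacts [⟨_, .inl rfl, rfl⟩, ⟨_, .inr rfl, rfl⟩]
  have hxf : x ∈ Set.range f := hx.elim (fun h => ⟨0, h.symm⟩) fun h => ⟨1, h.symm⟩
  have h_total : ∀ a ∈ TInterval (trc fun _ => x) (trc f), ∀ b ∈ TInterval (trc fun _ => x) (trc f),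
      TraceLE a b ∨ TraceLE b a := fun _ ha _ hb =>
    traceLE_total_of_mem_TInterval_const hf hx ha hb
  have h_chain : IsChain TraceLE (TInterval (trc fun _ => x) (trc f)) := fun _ ha _ hb _ =>
    h_total _ ha _ hb
  have h_least : (trc fun _ => x) ∈ TInterval (trc fun _ => x) (trc f) :=
    (mem_TInterval_const_iff hf).2 ⟨_, isDipath_const x, ⟨0, rfl⟩, by simpa using hxf, rfl⟩
  have h_greatest : trc f ∈ TInterval (trc fun _ => x) (trc f) :=
    (mem_TInterval_const_iff hf).2 ⟨f, hf, hxf, subset_rfl, rfl⟩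
  exact ⟨⟨h_chain, h_total⟩, ⟨h_least, h_greatest⟩, fun _ _ _ _ hC => hC,
    fun _ _ _ _ hC h_max => (h_max _ h_chain h_least h_greatest (fun _ hc => hc) hC).symm⟩

end
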